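/- Let {X_k} be a Markov chain on a finite state space S with initial distribution q and irreducible transition probability matrix P, and let f : S → [a,b]. Then for every t > 0, the one-sided bound Pr_q( Σ_{k=1}^n ( f(X_k) − E_q[f(X_k)] ) ≥ t ) ≤ exp( −t² / (2ν²) ) holds, where ν² = (1/4) n (b−a)² HitT(P)². -/

import Mathlib

/-!
The proof is a martingale argument, carried out by backward recursion on the path.  Let
`G_m(x) = E[f(X_1) + ⋯ + f(X_m) | X_1 = x]` (`cumExp`).  The centred sum
`∑_{k ≤ n} (f(X_k) - E_q f(X_k))` is the final value of its Doob martingale, whose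
`k`-th increment is `G_{n-k+1}(X_k)`
minus its conditional mean given the past, so it suffices to bound the oscillation of each `G_m`
and to apply Hoeffding's lemma `n` times.

* `cumExp_sub_le`: running the chain from `x` until it hits `y` gives
  `G_m(x) - G_m(y) ≤ (b - a) E_x[min(T_y, m)]`, and `sum_survive_le_HitT` bounds the last factor
  by `HitT P`.  That bound needs `∑_n Pr(T_y > n) < ∞` (`summable_survive`), which is where
  irreducibility enters: an infinite expectation would be recorded as `0` in `HitT P`.
* `sum_cumMgf_le`: iterating Hoeffding's lemma gives
  `E_q exp(l ∑ f(X_k)) ≤ exp(l E_q ∑ f(X_k) + n l² D² / 8)` with `D = (b - a) HitT P`.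
* `chainProb_le_exp` is the resulting Chernoff bound, which is optimised over `l` at the end.
-/

open Finset

namespace MC

variable {S : Type*}

/-- `q` is a probability distribution on the finite state space `S`. -/
def IsProbVec [Fintype S] (q : S → ℝ) : Prop :=
  (∀ x, 0 ≤ q x) ∧ ∑ x, q x = 1

/-- `P` is a transition probability matrix (row-stochastic). -/
def IsStochastic [Fintype S] (P : S → S → ℝ) : Prop :=
  (∀ x y, 0 ≤ P x y) ∧ ∀ x, ∑ y, P x y = 1

/-- `n`-step transition probabilities `Pⁿ(x,y)`. -/
def matPow [Fintype S] [DecidableEq S] (P : S → S → ℝ) : ℕ → S → S → ℝ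
  | 0 => fun x y => if x = y then 1 else 0
  | n + 1 => fun x y => ∑ z, matPow P n x z * P z y

/-- `P` is irreducible: any state can reach any state. -/
def IsIrreducible [Fintype S] [DecidableEq S] (P : S → S → ℝ) : Prop :=
  ∀ x y, ∃ n, 1 ≤ n ∧ 0 < matPow P n x y

/-- `survive P y n x = Pr(T_y > n | X_1 = x)`, where
`T_y = inf {n ≥ 0 : X_{n+1} = y}` is the hitting time of `y`. -/
def survive [Fintype S] [DecidableEq S] (P : S → S → ℝ) (y : S) : ℕ → S → ℝ
  | 0 => fun x => if x = y then 0 else 1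
  | n + 1 => fun x => if x = y then 0 else ∑ z, P x z * survive P y n z

/-- The expected hitting time `E[T_y | X_1 = x] = ∑_{n ≥ 0} Pr(T_y > n | X_1 = x)`. -/
noncomputable def hitExp [Fintype S] [DecidableEq S] (P : S → S → ℝ) (x y : S) : ℝ :=
  (∑' n, ENNReal.ofReal (survive P y n x)).toReal

/-- The maximum expected hitting time `HitT(P) = max_{x,y} E[T_y | X_1 = x]`. -/
noncomputable def HitT [Fintype S] [DecidableEq S] (P : S → S → ℝ) : ℝ :=
  ⨆ x, ⨆ y, hitExp P x y

/-- The probability of the cylinder set given by the path `ω = (X_1, …, X_{n+1})`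
for the chain with initial distribution `q` and transition matrix `P`. -/
noncomputable def pathProb [Fintype S] (q : S → ℝ) (P : S → S → ℝ) {n : ℕ}
    (ω : Fin (n + 1) → S) : ℝ :=
  q (ω 0) * ∏ i : Fin n, P (ω i.castSucc) (ω i.succ)

/-- `Pr_q(A)` for an event `A` determined by the first `n+1` states `(X_1, …, X_{n+1})`. -/
noncomputable def chainProb [Fintype S] (q : S → ℝ) (P : S → S → ℝ) (n : ℕ)
    (A : Set (Fin (n + 1) → S)) : ℝ :=
  ∑ ω : Fin (n + 1) → S, A.indicator (pathProb q P) ω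

/-- `stepDist q P k` is the distribution of `X_{k+1}` when `X_1 ∼ q`. -/
def stepDist [Fintype S] (q : S → ℝ) (P : S → S → ℝ) : ℕ → S → ℝ
  | 0 => q
  | k + 1 => fun y => ∑ x, stepDist q P k x * P x y

/-! ### Hitting times -/

section HittingTimes

variable [Fintype S] [DecidableEq S] {P : S → S → ℝ}

lemma matPow_succ_left (P : S → S → ℝ) (n : ℕ) (x y : S) :
    matPow P (n + 1) x y = ∑ z, P x z * matPow P n z y := by
  induction n generalizing y with
  | zero => simp [matPow]
  | succ n ih =>
    rw [matPow]
    simp_rw [ih]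
    simp only [matPow, Finset.sum_mul, Finset.mul_sum]
    rw [Finset.sum_comm]
    simp only [mul_assoc]

lemma matPow_le_one (hP : IsStochastic P) (n : ℕ) (x y : S) : matPow P n x y ≤ 1 := by
  induction n generalizing x with
  | zero => simp only [matPow]; split_ifs <;> norm_num
  | succ n ih =>
    rw [matPow_succ_left, ← hP.2 x]
    exact Finset.sum_le_sum fun z _ => mul_le_of_le_one_right (hP.1 x z) (ih z)

lemma survive_nonneg (hP : IsStochastic P) (y : S) (n : ℕ) (x : S) : 0 ≤ survive P y n x := by
  induction n generalizing x with
  | zero => simp only [survive]; split_ifs <;> norm_num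
  | succ n ih =>
    simp only [survive]
    split_ifs
    · exact le_rfl
    · exact Finset.sum_nonneg fun z _ => mul_nonneg (hP.1 x z) (ih z)

lemma survive_self (P : S → S → ℝ) (y : S) (n : ℕ) : survive P y n y = 0 := by
  cases n <;> simp [survive]

/-- Being at `y` at time `n` forces `T_y ≤ n`. -/
lemma matPow_add_survive_le_one (hP : IsStochastic P) (y : S) (n : ℕ) (x : S) :
    matPow P n x y + survive P y n x ≤ 1 := by
  induction n generalizing x with
  | zero => simp only [matPow, survive]; split_ifs <;> norm_num
  | succ n ih =>
    by_cases hxy : x = y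
    · subst hxy
      rw [survive_self, add_zero]
      exact matPow_le_one hP _ _ _
    · simp only [matPow_succ_left, survive, if_neg hxy]
      rw [← Finset.sum_add_distrib, ← hP.2 x]
      refine Finset.sum_le_sum fun z _ => ?_
      rw [← mul_add]
      exact mul_le_of_le_one_right (hP.1 x z) (ih z)

/-- The Markov property at time `n`: a bound `d` on the probability of surviving `N` more steps,
uniform in the current state, contributes a factor `d`. -/
lemma survive_add_le (hP : IsStochastic P) (y : S) {N : ℕ} {d : ℝ}
    (hd : ∀ x, survive P y N x ≤ d) (n : ℕ) (x : S) :
    survive P y (n + N) x ≤ d * survive P y n x := by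
  induction n generalizing x with
  | zero =>
    by_cases hxy : x = y
    · subst hxy; simp [survive_self]
    · simpa [survive, hxy] using hd x
  | succ n ih =>
    by_cases hxy : x = y
    · subst hxy; simp [survive_self]
    · rw [Nat.add_right_comm]
      simp only [survive, if_neg hxy]
      rw [Finset.mul_sum]
      refine Finset.sum_le_sum fun z _ => ?_
      rw [mul_left_comm]
      exact mul_le_mul_of_nonneg_left (ih z) (hP.1 x z)

lemma survive_le_one (hP : IsStochastic P) (y : S) (n : ℕ) (x : S) : survive P y n x ≤ 1 := by
  induction n generalizing x with
  | zero => simp only [survive]; split_ifs <;> norm_num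
  | succ n ih =>
    simp only [survive]
    split_ifs
    · exact zero_le_one
    · rw [← hP.2 x]
      exact Finset.sum_le_sum fun z _ => mul_le_of_le_one_right (hP.1 x z) (ih z)

lemma survive_antitone (hP : IsStochastic P) (y x : S) : Antitone fun n => survive P y n x := by
  refine antitone_nat_of_succ_le fun n => ?_
  simpa using survive_add_le hP y (N := 1) (survive_le_one hP y 1) n x

/-- By irreducibility, after some fixed number of steps the chain has had a uniformly positive
chance of hitting `y`. -/
lemma exists_survive_le (hP : IsStochastic P) (hirr : IsIrreducible P) (y : S) :
    ∃ N : ℕ, ∃ c : ℝ, c < 1 ∧ ∀ x, survive P y N x ≤ c := by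
  choose m _ hm using fun x => hirr x y
  have : Nonempty S := ⟨y⟩
  refine ⟨Finset.univ.sup m, Finset.univ.sup' Finset.univ_nonempty
    (survive P y (Finset.univ.sup m)), ?_, fun x => Finset.le_sup' _ (Finset.mem_univ x)⟩
  rw [Finset.sup'_lt_iff]
  intro x hx
  have h1 := survive_antitone hP y x (Finset.le_sup (f := m) hx)
  have h2 := matPow_add_survive_le_one hP y (m x) x
  have h3 := hm x
  simp only at h1
  linarith

lemma summable_survive (hP : IsStochastic P) (hirr : IsIrreducible P) (x y : S) :
    Summable fun n => survive P y n x := by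
  obtain ⟨N, c, hc, hN⟩ := exists_survive_le hP hirr y
  refine summable_of_sum_range_le (c := N / (1 - c)) (fun n => survive_nonneg hP y n x)
    fun M => ?_
  -- The partial sums `A_M` satisfy `A_M ≤ A_{N+M} ≤ N + c * A_M`.
  have h1 : ∑ n ∈ Finset.range M, survive P y n x
      ≤ ∑ n ∈ Finset.range (N + M), survive P y n x :=
    Finset.sum_le_sum_of_subset_of_nonneg (Finset.range_mono (Nat.le_add_left M N))
      fun n _ _ => survive_nonneg hP y n x
  have h2 : ∑ n ∈ Finset.range N, survive P y n x ≤ N := by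
    simpa using Finset.sum_le_sum fun n (_ : n ∈ Finset.range N) => survive_le_one hP y n x
  have h3 : ∑ n ∈ Finset.range M, survive P y (N + n) x
      ≤ c * ∑ n ∈ Finset.range M, survive P y n x := by
    rw [Finset.mul_sum]
    refine Finset.sum_le_sum fun n _ => ?_
    rw [Nat.add_comm N n]
    exact survive_add_le hP y hN n x
  rw [Finset.sum_range_add] at h1
  rw [le_div_iff₀ (by linarith)]
  linarith

lemma sum_survive_le_HitT (hP : IsStochastic P) (hirr : IsIrreducible P) (m : ℕ) (x y : S) :
    ∑ n ∈ Finset.range m, survive P y n x ≤ HitT P := by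
  have hs := summable_survive hP hirr x y
  have h0 := fun n => survive_nonneg hP y n x
  have h1 : hitExp P x y = ∑' n, survive P y n x := by
    rw [hitExp, ← ENNReal.ofReal_tsum_of_nonneg h0 hs, ENNReal.toReal_ofReal (tsum_nonneg h0)]
  calc ∑ n ∈ Finset.range m, survive P y n x ≤ hitExp P x y := by
        rw [h1]; exact hs.sum_le_tsum _ fun n _ => h0 n
    _ ≤ ⨆ y, hitExp P x y := le_ciSup (Set.finite_range _).bddAbove y
    _ ≤ HitT P := le_ciSup (f := fun x => ⨆ y, hitExp P x y) (Set.finite_range _).bddAbove x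

end HittingTimes

/-! ### Expected partial sums -/

section Potential

variable [Fintype S] {P : S → S → ℝ}

/-- `cumExp P f m x = E[f(X_1) + ⋯ + f(X_m) | X_1 = x]`, defined by first-step analysis. -/
def cumExp (P : S → S → ℝ) (f : S → ℝ) : ℕ → S → ℝ
  | 0 => fun _ => 0
  | m + 1 => fun x => f x + ∑ z, P x z * cumExp P f m z

lemma le_cumExp_succ_sub (hP : IsStochastic P) {f : S → ℝ} {a : ℝ} (hf : ∀ x, a ≤ f x)
    (m : ℕ) (x : S) : a ≤ cumExp P f (m + 1) x - cumExp P f m x := by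
  induction m generalizing x with
  | zero => simpa [cumExp] using hf x
  | succ m ih =>
    rw [cumExp, cumExp, add_sub_add_left_eq_sub, ← Finset.sum_sub_distrib]
    calc a = ∑ z, P x z * a := by rw [← Finset.sum_mul, hP.2, one_mul]
      _ ≤ _ := Finset.sum_le_sum fun z _ => by
        rw [← mul_sub]; exact mul_le_mul_of_nonneg_left (ih z) (hP.1 x z)

/-- Running the chain from `x` until it hits `y` costs at most `b - a` per step, so the expected
partial sums from `x` and `y` differ by at most `(b - a) * E[min(T_y, m)]`. -/
lemma cumExp_sub_le [DecidableEq S] (hP : IsStochastic P) {f : S → ℝ} {a b : ℝ}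
    (hf : ∀ x, f x ∈ Set.Icc a b) (m : ℕ) (x y : S) :
    cumExp P f m x - cumExp P f m y ≤ (b - a) * ∑ n ∈ Finset.range m, survive P y n x := by
  induction m generalizing x with
  | zero => simp [cumExp]
  | succ m ih =>
    by_cases hxy : x = y
    · subst hxy; simp [survive_self]
    · have hA : ∑ n ∈ Finset.range (m + 1), survive P y n x
          = 1 + ∑ z, P x z * ∑ n ∈ Finset.range m, survive P y n z := by
        rw [Finset.sum_range_succ', add_comm]
        simp only [survive, if_neg hxy, Finset.mul_sum]
        rw [Finset.sum_comm]
      have h1 := le_cumExp_succ_sub hP (fun z => (hf z).1) m y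
      have h2 : ∑ z, P x z * cumExp P f m z - cumExp P f m y
          ≤ (b - a) * ∑ z, P x z * ∑ n ∈ Finset.range m, survive P y n z := by
        calc _ = ∑ z, P x z * (cumExp P f m z - cumExp P f m y) := by
              simp only [mul_sub, Finset.sum_sub_distrib]
              rw [← Finset.sum_mul, hP.2, one_mul]
          _ ≤ _ := by
              rw [Finset.mul_sum]
              refine Finset.sum_le_sum fun z _ => ?_
              rw [mul_left_comm]
              exact mul_le_mul_of_nonneg_left (ih z) (hP.1 x z)
      have h3 : cumExp P f (m + 1) x = f x + ∑ z, P x z * cumExp P f m z := rfl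
      rw [hA, mul_add, h3]
      linarith [(hf x).2]

lemma stepDist_succ_left (q : S → ℝ) (P : S → S → ℝ) (k : ℕ) :
    stepDist q P (k + 1) = stepDist (fun y => ∑ x, q x * P x y) P k := by
  induction k with
  | zero => rfl
  | succ k ih => rw [stepDist, ih]; rfl

lemma sum_stepDist_eq (q : S → ℝ) (P : S → S → ℝ) (f : S → ℝ) (n : ℕ) :
    ∑ k : Fin n, ∑ x, stepDist q P (k : ℕ) x * f x = ∑ x, q x * cumExp P f n x := by
  induction n generalizing q with
  | zero => simp [cumExp]
  | succ n ih =>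
    rw [Fin.sum_univ_succ]
    simp only [Fin.val_succ, stepDist_succ_left, Fin.val_zero]
    rw [ih]
    simp only [cumExp, mul_add, Finset.sum_add_distrib, stepDist, Finset.sum_mul, Finset.mul_sum]
    rw [Finset.sum_comm]
    simp only [mul_assoc]

end Potential

/-! ### Exponential moments -/

section Moments

variable [Fintype S] {P : S → S → ℝ}

/-- Hoeffding's lemma for a probability vector on a finite set. -/
lemma hoeffding_finite {p : S → ℝ} (hp : IsProbVec p) {g : S → ℝ} {D : ℝ}
    (hg : ∀ x y, g x - g y ≤ D) (l : ℝ) :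
    ∑ x, p x * Real.exp (l * g x) ≤ Real.exp (l * ∑ x, p x * g x + l ^ 2 * D ^ 2 / 8) := by
  classical
  let : MeasurableSpace S := ⊤
  have hne : (Finset.univ : Finset S).Nonempty := by
    rw [Finset.nonempty_iff_ne_empty]
    intro h
    simpa [h] using hp.2
  obtain ⟨x₀, -, hx₀⟩ := Finset.exists_min_image _ g hne
  have hsum : ∑ x, ENNReal.ofReal (p x) = 1 := by
    rw [← ENNReal.ofReal_sum_of_nonneg fun x _ => hp.1 x, hp.2, ENNReal.ofReal_one]
  let μ : MeasureTheory.Measure S := (PMF.ofFintype (fun x => ENNReal.ofReal (p x)) hsum).toMeasure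
  have : MeasureTheory.IsProbabilityMeasure μ := PMF.toMeasure.isProbabilityMeasure _
  have hintegral : ∀ h : S → ℝ, ∫ x, h x ∂μ = ∑ x, p x * h x := fun h => by
    rw [PMF.integral_eq_sum]
    simp [PMF.ofFintype_apply, ENNReal.toReal_ofReal (hp.1 _)]
  have key := (ProbabilityTheory.hasSubgaussianMGF_of_mem_Icc (μ := μ) (X := g)
    (a := g x₀) (b := g x₀ + D) (measurable_of_finite g).aemeasurable
    (Filter.Eventually.of_forall fun x =>
      ⟨hx₀ x (Finset.mem_univ x), by linarith [hg x x₀]⟩)).mgf_le l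
  rw [ProbabilityTheory.mgf, hintegral, hintegral] at key
  have hK : (((‖g x₀ + D - g x₀‖₊ / 2) ^ 2 : NNReal) : ℝ) * l ^ 2 / 2 = l ^ 2 * D ^ 2 / 8 := by
    rw [add_sub_cancel_left]
    push_cast
    rw [Real.norm_eq_abs, div_pow, sq_abs]
    ring
  rw [hK] at key
  calc ∑ x, p x * Real.exp (l * g x)
      = Real.exp (l * ∑ x, p x * g x)
          * ∑ x, p x * Real.exp (l * (g x - ∑ x, p x * g x)) := by
        rw [Finset.mul_sum]
        refine Finset.sum_congr rfl fun x _ => ?_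
        rw [mul_left_comm, ← Real.exp_add]
        congr 2
        ring
    _ ≤ Real.exp (l * ∑ x, p x * g x) * Real.exp (l ^ 2 * D ^ 2 / 8) :=
        mul_le_mul_of_nonneg_left key (Real.exp_nonneg _)
    _ = _ := (Real.exp_add _ _).symm

/-- `cumMgf P f l m x = E[exp(l * (f(X_1) + ⋯ + f(X_m))) | X_1 = x]`, defined by first-step
analysis. -/
noncomputable def cumMgf (P : S → S → ℝ) (f : S → ℝ) (l : ℝ) : ℕ → S → ℝ
  | 0 => fun _ => 1
  | m + 1 => fun x => Real.exp (l * f x) * ∑ z, P x z * cumMgf P f l m z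

/-- One application of Hoeffding's lemma per transition, valid from any initial distribution: in
the inductive step the rows of `P` play the role of the initial distribution. -/
lemma sum_cumMgf_le (hP : IsStochastic P) {f : S → ℝ} {D : ℝ}
    (hD : ∀ m x y, cumExp P f m x - cumExp P f m y ≤ D) (l : ℝ) (m : ℕ)
    {p : S → ℝ} (hp : IsProbVec p) :
    ∑ x, p x * cumMgf P f l m x
      ≤ Real.exp (l * ∑ x, p x * cumExp P f m x + m * (l ^ 2 * D ^ 2 / 8)) := by
  induction m generalizing p with
  | zero => simp [cumMgf, cumExp, hp.2]
  | succ m ih =>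
    calc ∑ x, p x * cumMgf P f l (m + 1) x
        ≤ ∑ x, p x * (Real.exp (m * (l ^ 2 * D ^ 2 / 8))
            * Real.exp (l * cumExp P f (m + 1) x)) := by
          refine Finset.sum_le_sum fun x _ => mul_le_mul_of_nonneg_left ?_ (hp.1 x)
          rw [cumMgf]
          refine (mul_le_mul_of_nonneg_left (ih (p := P x) ⟨hP.1 x, hP.2 x⟩)
            (Real.exp_nonneg _)).trans_eq ?_
          rw [← Real.exp_add, ← Real.exp_add, cumExp]
          congr 1
          ring
      _ = Real.exp (m * (l ^ 2 * D ^ 2 / 8))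
            * ∑ x, p x * Real.exp (l * cumExp P f (m + 1) x) := by
          rw [Finset.mul_sum]
          exact Finset.sum_congr rfl fun x _ => mul_left_comm _ _ _
      _ ≤ Real.exp (m * (l ^ 2 * D ^ 2 / 8))
            * Real.exp (l * ∑ x, p x * cumExp P f (m + 1) x + l ^ 2 * D ^ 2 / 8) :=
          mul_le_mul_of_nonneg_left (hoeffding_finite hp (hD (m + 1)) l) (Real.exp_nonneg _)
      _ = _ := by
          rw [← Real.exp_add]
          congr 1
          push_cast
          ring

lemma pathProb_nonneg (hP : IsStochastic P) {q : S → ℝ} (hq : IsProbVec q) {n : ℕ}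
    (ω : Fin (n + 1) → S) : 0 ≤ pathProb q P ω :=
  mul_nonneg (hq.1 _) (Finset.prod_nonneg fun _ _ => hP.1 _ _)

lemma pathProb_cons (q : S → ℝ) (P : S → S → ℝ) {n : ℕ} (x : S) (ω : Fin (n + 1) → S) :
    pathProb q P (Fin.cons x ω : Fin (n + 2) → S) = q x * pathProb (P x) P ω := by
  simp only [pathProb, Fin.prod_univ_succ, Fin.castSucc_zero, Fin.cons_zero, Fin.cons_succ,
    ← Fin.succ_castSucc]

lemma sum_pathProb_exp (q : S → ℝ) (P : S → S → ℝ) (f : S → ℝ) (l : ℝ) (n : ℕ) :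
    ∑ ω : Fin (n + 1) → S, pathProb q P ω * Real.exp (l * ∑ k : Fin n, f (ω k.castSucc))
      = ∑ x, q x * cumMgf P f l n x := by
  induction n generalizing q with
  | zero =>
    rw [← (Equiv.funUnique (Fin 1) S).symm.sum_comp]
    simp [pathProb, cumMgf]
  | succ n ih =>
    rw [← (Fin.consEquiv fun _ : Fin (n + 2) => S).sum_comp, Fintype.sum_prod_type]
    refine Finset.sum_congr rfl fun x _ => ?_
    simp only [cumMgf]
    rw [← ih (P x), Finset.mul_sum, Finset.mul_sum]
    refine Finset.sum_congr rfl fun ω _ => ?_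
    simp only [Fin.consEquiv, Equiv.coe_fn_mk]
    rw [pathProb_cons, Fin.sum_univ_succ]
    simp only [Fin.castSucc_zero, Fin.cons_zero, ← Fin.succ_castSucc, Fin.cons_succ]
    rw [mul_add, Real.exp_add]
    ring

/-- The Chernoff bound. -/
lemma chainProb_le_exp (hP : IsStochastic P) {q : S → ℝ} (hq : IsProbVec q) {f : S → ℝ} {D : ℝ}
    (hD : ∀ m x y, cumExp P f m x - cumExp P f m y ≤ D) (n : ℕ) (t : ℝ) {l : ℝ} (hl : 0 ≤ l) :
    chainProb q P n
      {ω | t ≤ ∑ k : Fin n, (f (ω k.castSucc) - ∑ x, stepDist q P (k : ℕ) x * f x)} ≤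
      Real.exp (-l * t + n * (l ^ 2 * D ^ 2 / 8)) := by
  set C := ∑ x, q x * cumExp P f n x with hC
  calc chainProb q P n
        {ω | t ≤ ∑ k : Fin n, (f (ω k.castSucc) - ∑ x, stepDist q P (k : ℕ) x * f x)}
      ≤ ∑ ω : Fin (n + 1) → S, Real.exp (-l * t - l * C)
          * (pathProb q P ω * Real.exp (l * ∑ k : Fin n, f (ω k.castSucc))) := by
        refine Finset.sum_le_sum fun ω _ => ?_
        have h0 := pathProb_nonneg hP hq ω
        rw [mul_left_comm, ← Real.exp_add]
        refine Set.indicator_apply_le' (fun hω => ?_)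
          fun _ => mul_nonneg h0 (Real.exp_nonneg _)
        rw [Set.mem_ofPred_eq, Finset.sum_sub_distrib, sum_stepDist_eq, ← hC] at hω
        refine le_mul_of_one_le_right h0 (Real.one_le_exp ?_)
        nlinarith [mul_le_mul_of_nonneg_left hω hl]
    _ = Real.exp (-l * t - l * C) * ∑ x, q x * cumMgf P f l n x := by
        rw [← Finset.mul_sum, sum_pathProb_exp]
    _ ≤ Real.exp (-l * t - l * C) * Real.exp (l * C + n * (l ^ 2 * D ^ 2 / 8)) :=
        mul_le_mul_of_nonneg_left (sum_cumMgf_le hP hD l n hq) (Real.exp_nonneg _)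
    _ = _ := by
        rw [← Real.exp_add]
        congr 1
        ring

end Moments

end MC

open MC in
/-- **One-sided Hoeffding inequality for irreducible finite Markov chains.**
For a Markov chain `X_1, X_2, …` on a finite state space `S` with initial
distribution `q` and irreducible transition matrix `P`, and `f : S → [a,b]`,
for every `t > 0`,
`Pr_q(∑_{k=1}^n (f(X_k) − E_q[f(X_k)]) ≥ t) ≤ exp(−t² / (2ν²))`,
where `ν² = (1/4) n (b−a)² HitT(P)²`. -/
theorem markov_hoeffding_one_sided {S : Type*} [Fintype S] [DecidableEq S]
    (P : S → S → ℝ) (hP : IsStochastic P) (hirr : IsIrreducible P)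
    (q : S → ℝ) (hq : IsProbVec q)
    (f : S → ℝ) (a b : ℝ) (hf : ∀ x, f x ∈ Set.Icc a b)
    (n : ℕ) (t : ℝ) (ht : 0 < t) :
    chainProb q P n
      {ω | t ≤ ∑ k : Fin n, (f (ω k.castSucc) - ∑ x, stepDist q P (k : ℕ) x * f x)} ≤
      Real.exp (-t ^ 2 / (2 * (1 / 4 * n * (b - a) ^ 2 * HitT P ^ 2))) := by
  have hD : ∀ m x y, cumExp P f m x - cumExp P f m y ≤ (b - a) * HitT P := fun m x y =>
    (cumExp_sub_le hP hf m x y).trans (mul_le_mul_of_nonneg_left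
      (sum_survive_le_HitT hP hirr m x y) (sub_nonneg.2 ((hf x).1.trans (hf x).2)))
  set V : ℝ := n * ((b - a) * HitT P) ^ 2 with hV
  have hV0 : 0 ≤ V := by positivity
  -- `l = 4t/V` minimises `-l t + l² V / 8`; for `V = 0` it is `0` and both sides reduce to `1`.
  refine (chainProb_le_exp hP hq hD n t (l := 4 * t / V) (by positivity)).trans_eq ?_
  rw [show (2 * (1 / 4 * n * (b - a) ^ 2 * HitT P ^ 2) : ℝ) = V / 2 by rw [hV]; ring,
    show (n * ((4 * t / V) ^ 2 * ((b - a) * HitT P) ^ 2 / 8) : ℝ) = (4 * t / V) ^ 2 * V / 8 by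
      rw [hV]; ring]
  congr 1
  rcases eq_or_ne V 0 with h | h
  · simp [h]
  · field_simp
    ring
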